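/- Return equivalence of the Diaster proxy reward: Assume ρ_i^π(s) > 0 for every state s ∈ S and every 0 ≤ i ≤ T, and suppose r : S × A → ℝ satisfies R_sub(τ_{0:T}) = Σ_{t=0}^{T−1} r(s_t,a_t) for every full trajectory τ_{0:T} (exact episodic return decomposition). Then Σ_{i=0}^{T−1} Σ_{s∈S} Σ_{a∈A} ρ_i^π(s) π(a|s) r̂_i^π(s,a) = Σ_{τ_{0:T}} 𝒯_T^π(τ_{0:T}) · Σ_{t=0}^{T−1} r(s_t,a_t); i.e., the expected total proxy reward along an episode equals the expected episodic return of the original reward r under the policy π. -/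

import Mathlib

open Finset

/-- Trajectory distribution 𝒯_t^π. -/
noncomputable def Ttraj {S A : Type*} (ρ0 : S → ℝ) (P : S → A → S → ℝ)
    (pol : S → A → ℝ) : (t : ℕ) → (Fin t → S × A) → ℝ
  | 0, _ => 1
  | t + 1, τ =>
      ρ0 (τ 0).1 * pol (τ 0).1 (τ 0).2 *
        ∏ i : Fin t,
          (P (τ i.castSucc).1 (τ i.castSucc).2 (τ i.succ).1 *
            pol (τ i.succ).1 (τ i.succ).2)

/-- On-policy state distribution ρ_t^π. -/
noncomputable def rhoPi {S A : Type*} [Fintype S] [Fintype A] (ρ0 : S → ℝ)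
    (P : S → A → S → ℝ) (pol : S → A → ℝ) : ℕ → S → ℝ
  | 0 => ρ0
  | t + 1 => fun s =>
      ∑ τ : Fin (t + 1) → S × A,
        Ttraj ρ0 P pol (t + 1) τ * P (τ (Fin.last t)).1 (τ (Fin.last t)).2 s

/-- Conditioned sub-trajectory distribution Γ_t^π(τ|s). -/
noncomputable def GammaPi {S A : Type*} [Fintype S] [Fintype A] (ρ0 : S → ℝ)
    (P : S → A → S → ℝ) (pol : S → A → ℝ) :
    (t : ℕ) → (Fin t → S × A) → S → ℝ
  | 0, _, _ => 1
  | t + 1, τ, s =>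
      Ttraj ρ0 P pol (t + 1) τ * P (τ (Fin.last t)).1 (τ (Fin.last t)).2 s /
        rhoPi ρ0 P pol (t + 1) s

/-- Step-wise proxy reward r̂_t^π(s,a). -/
noncomputable def rhat {S A : Type*} [Fintype S] [Fintype A] (ρ0 : S → ℝ)
    (P : S → A → S → ℝ) (pol : S → A → ℝ)
    (Rsub : (t : ℕ) → (Fin t → S × A) → ℝ) (t : ℕ) (s : S) (a : A) : ℝ :=
  ∑ τ : Fin t → S × A,
    GammaPi ρ0 P pol t τ s * (Rsub (t + 1) (Fin.snoc τ (s, a)) - Rsub t τ)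

/-- h-step transition kernel μ_h^π (junk value 0 at h = 0). -/
noncomputable def muStep {S A : Type*} [Fintype S] [Fintype A]
    (P : S → A → S → ℝ) (pol : S → A → ℝ) : ℕ → S → A → S → ℝ
  | 0, _, _, _ => 0
  | 1, s, a, s' => P s a s'
  | h + 2, s, a, s'' =>
      ∑ s', ∑ a', muStep P pol (h + 1) s a s' * pol s' a' * P s' a' s''

/-- Joint weight of a sub-trajectory and its next state. -/
noncomputable def jointK {S A : Type*} (ρ0 : S → ℝ) (P : S → A → S → ℝ)
    (pol : S → A → ℝ) : (t : ℕ) → (Fin t → S × A) → S → ℝ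
  | 0, _, s => ρ0 s
  | t + 1, τ, s =>
      Ttraj ρ0 P pol (t + 1) τ * P (τ (Fin.last t)).1 (τ (Fin.last t)).2 s

theorem Ttraj_snoc {S A : Type*} (ρ0 : S → ℝ) (P : S → A → S → ℝ)
    (pol : S → A → ℝ) (t : ℕ) (τ : Fin t → S × A) (s : S) (a : A) :
    Ttraj ρ0 P pol (t + 1) (Fin.snoc τ (s, a)) = jointK ρ0 P pol t τ s * pol s a := by
  cases t with
  | zero => simp [Ttraj, jointK, Fin.snoc]
  | succ t =>
    have h0 : (Fin.snoc τ (s, a) : Fin (t + 2) → S × A) 0 = τ 0 := by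
      have := Fin.snoc_castSucc (α := fun _ => S × A) (s, a) τ 0
      simpa using this
    simp only [Ttraj, jointK, Fin.prod_univ_castSucc (n := t), h0, Fin.succ_last,
      Fin.snoc_last, Fin.snoc_castSucc, Fin.succ_castSucc]
    ring

theorem sum_snoc {X : Type*} [Fintype X] (t : ℕ) (f : (Fin (t + 1) → X) → ℝ) :
    ∑ τ : Fin (t + 1) → X, f τ = ∑ x : X, ∑ τ : Fin t → X, f (Fin.snoc τ x) := by
  rw [← Fintype.sum_prod_type' (f := fun x (τ : Fin t → X) => f (Fin.snoc τ x))]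
  exact ((Fin.snocEquiv (fun _ : Fin (t + 1) => X)).sum_comp f).symm

theorem rho_Gamma {S A : Type*} [Fintype S] [Fintype A] (ρ0 : S → ℝ)
    (P : S → A → S → ℝ) (pol : S → A → ℝ) (t : ℕ) (τ : Fin t → S × A) (s : S)
    (h : rhoPi ρ0 P pol t s ≠ 0) :
    rhoPi ρ0 P pol t s * GammaPi ρ0 P pol t τ s = jointK ρ0 P pol t τ s := by
  cases t with
  | zero => simp [rhoPi, GammaPi, jointK]
  | succ t => rw [GammaPi, jointK, mul_div_cancel₀ _ h]

theorem sum_jointK {S A : Type*} [Fintype S] (ρ0 : S → ℝ) (hρ0sum : ∑ s, ρ0 s = 1)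
    (P : S → A → S → ℝ) (hPsum : ∀ s a, ∑ s', P s a s' = 1) (pol : S → A → ℝ)
    (t : ℕ) (τ : Fin t → S × A) :
    ∑ s, jointK ρ0 P pol t τ s = Ttraj ρ0 P pol t τ := by
  cases t with
  | zero => simpa [jointK, Ttraj] using hρ0sum
  | succ t => simp only [jointK, ← Finset.mul_sum, hPsum, mul_one]

/-- Return equivalence of the Diaster proxy reward. -/
theorem diaster_return_equivalence {S A : Type*} [Fintype S] [Fintype A]
    [Nonempty S] [Nonempty A]
    (T : ℕ) (hT : 1 ≤ T)
    (ρ0 : S → ℝ) (hρ0nn : ∀ s, 0 ≤ ρ0 s) (hρ0sum : ∑ s, ρ0 s = 1)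
    (P : S → A → S → ℝ) (hPnn : ∀ s a s', 0 ≤ P s a s')
    (hPsum : ∀ s a, ∑ s', P s a s' = 1)
    (pol : S → A → ℝ) (hpolnn : ∀ s a, 0 ≤ pol s a)
    (hpolsum : ∀ s, ∑ a, pol s a = 1)
    (Rsub : (t : ℕ) → (Fin t → S × A) → ℝ)
    (hRsub0 : ∀ τ : Fin 0 → S × A, Rsub 0 τ = 0)
    (hρpos : ∀ i ≤ T, ∀ s, 0 < rhoPi ρ0 P pol i s)
    (r : S → A → ℝ)
    (hdecomp : ∀ τ : Fin T → S × A, Rsub T τ = ∑ i : Fin T, r (τ i).1 (τ i).2) :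
    ∑ i ∈ Finset.range T, ∑ s, ∑ a,
        rhoPi ρ0 P pol i s * pol s a * rhat ρ0 P pol Rsub i s a
      = ∑ τ : Fin T → S × A,
          Ttraj ρ0 P pol T τ * ∑ i : Fin T, r (τ i).1 (τ i).2 := by
  have step : ∀ i ∈ Finset.range T, ∑ s, ∑ a,
        rhoPi ρ0 P pol i s * pol s a * rhat ρ0 P pol Rsub i s a
      = (∑ τ : Fin (i + 1) → S × A, Ttraj ρ0 P pol (i + 1) τ * Rsub (i + 1) τ)
        - ∑ τ : Fin i → S × A, Ttraj ρ0 P pol i τ * Rsub i τ := by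
    intro i hi
    have hi' : i ≤ T := (Finset.mem_range.mp hi).le
    have e1 : ∀ s a, rhoPi ρ0 P pol i s * pol s a * rhat ρ0 P pol Rsub i s a
        = (∑ τ : Fin i → S × A, Ttraj ρ0 P pol (i + 1) (Fin.snoc τ (s, a))
            * Rsub (i + 1) (Fin.snoc τ (s, a)))
          - ∑ τ : Fin i → S × A, jointK ρ0 P pol i τ s * pol s a * Rsub i τ := by
      intro s a
      rw [rhat, Finset.mul_sum, ← Finset.sum_sub_distrib]
      refine Finset.sum_congr rfl fun τ _ => ?_
      rw [Ttraj_snoc, ← rho_Gamma ρ0 P pol i τ s (hρpos i hi' s).ne']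
      ring
    simp only [e1, Finset.sum_sub_distrib]
    congr 1
    · rw [sum_snoc, Fintype.sum_prod_type]
    · have e2 : ∀ s, ∑ a, ∑ τ : Fin i → S × A, jointK ρ0 P pol i τ s * pol s a * Rsub i τ
          = ∑ τ : Fin i → S × A, jointK ρ0 P pol i τ s * Rsub i τ := by
        intro s
        rw [Finset.sum_comm]
        refine Finset.sum_congr rfl fun τ _ => ?_
        rw [← Finset.sum_mul, ← Finset.mul_sum, hpolsum, mul_one]
      simp only [e2]
      rw [Finset.sum_comm]
      refine Finset.sum_congr rfl fun τ _ => ?_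
      rw [← Finset.sum_mul, sum_jointK ρ0 hρ0sum P hPsum]
  rw [Finset.sum_congr rfl step,
    Finset.sum_range_sub (fun i => ∑ τ : Fin i → S × A, Ttraj ρ0 P pol i τ * Rsub i τ)]
  simp [hRsub0, hdecomp]
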